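/- For every n > 1 and every t ∈ [0, 2λ(n−1)], one has σ_{n−1}(t) = (c_{n−1} · σ_n · σ_n · ⋯ · σ_n)(t), where the right-hand side is the concatenation of c_{n−1} with n copies of σ_n (a map defined on [0, λ(n−1) + n·2λ(n)] = [0, 2λ(n−1)]). -/

import Mathlib

/-!
The elements of `B` form a tree in which a node of length `k` has `k + 1` children, and `⪯` lists
it in depth-first preorder. There are `k!` nodes of length `k`, so the subtree below a node `p` of
length `k` has total weight `λ(k) + λ(k)/2 + λ(k)/4 + ⋯ = 2λ(k)`. Hence `[τ(p), τ(p) + 2λ(k)]` splits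
into an interval of length `λ(k)`, on which `σ₁` is `c_k`, followed by the intervals of length
`2λ(k + 1)` belonging to the children of `p` (`tau_append_one`, `tau_child`).

The heart of the matter is `sigma_eq_of_length_eq`: if `p` and `q` have the same length, `σ₁` looks
the same on the intervals of `p` and `q`. Descend in parallel into the children containing the given
time. Either this stops, at a place where both values are given by the same loop `c_j`, or the time
is, for every `j`, within `2λ(j)` of the start of the interval of some node of length `j`. As `σ₁`
vanishes at such starts and is `1`-Lipschitz, both values are then `0`.

For `p = n·⟨1⟩` and `q` running through the `n` children of `(n-1)·⟨1⟩`, the theorem follows.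
-/

/-! ### Definitions -/


/-- The `j`-th entry (1-indexed) of a finite sequence of positive naturals,
viewed as a natural number. Only used for `1 ≤ j ≤ s.length`. -/
def nthSeq (s : List ℕ+) (j : ℕ) : ℕ := ↑(s.getD (j - 1) 1)

/-- The linear order `⪯` on finite sequences of positive natural numbers:
`s ⪯ t` iff either (a) there is an index `j ≤ min (ℓ s) (ℓ t)` which is the first index where
`s` and `t` differ, and there `s j < t j`, or (b) `ℓ s ≤ ℓ t` and `t` extends `s`. -/
def sle (s t : List ℕ+) : Prop :=
  (∃ j, 1 ≤ j ∧ j ≤ min s.length t.length ∧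
     (∀ i, 1 ≤ i → i < j → nthSeq s i = nthSeq t i) ∧ nthSeq s j < nthSeq t j) ∨
  (s.length ≤ t.length ∧ ∀ j, 1 ≤ j → j ≤ s.length → nthSeq s j = nthSeq t j)

/-- The strict version `≺` of the order `⪯`. -/
def slt (s t : List ℕ+) : Prop := sle s t ∧ s ≠ t

/-- The set `B` of nonempty sequences `s` with `s i ≤ i` for all `1 ≤ i ≤ ℓ s`. -/
def BSet : Set (List ℕ+) := {s | 1 ≤ s.length ∧ ∀ i, 1 ≤ i → i ≤ s.length → nthSeq s i ≤ i}

/-- `λ n = 1 / (2^n n!)`. -/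
noncomputable def lam (n : ℕ) : ℝ := 1 / ((2 : ℝ) ^ n * (n.factorial : ℝ))

/-- `τ s = Σ_{t ∈ B, t ≺ s} λ (ℓ t)`. -/
noncomputable def tau (s : List ℕ+) : ℝ :=
  ∑' t : {t : List ℕ+ // t ∈ BSet ∧ slt t s}, lam t.1.length

/-- The circle `L_n ⊂ ℝ² = ℂ` of radius `1/n` centred at `(1/n, 0)`. -/
noncomputable def Lcirc (n : ℕ) : Set ℂ := Metric.sphere ((1 / (n : ℝ) : ℝ) : ℂ) (1 / (n : ℝ))

/-- The Hawaiian Earring `ℍ ⊂ ℝ² = ℂ`, the union of the circles `L_n`, `n ≥ 1`. -/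
def HSet : Set ℂ := ⋃ n ∈ {n : ℕ | 1 ≤ n}, Lcirc n

open Classical in
/-- The metric `d` on the Hawaiian Earring: `d x y = ‖x - y‖` (Euclidean norm) if `x` and
`y` lie on a common circle `L_n`, and `d x y = ‖x‖ + ‖y‖` otherwise. -/
noncomputable def HEdist (x y : ℂ) : ℝ :=
  if ∃ n : ℕ, 1 ≤ n ∧ x ∈ Lcirc n ∧ y ∈ Lcirc n then ‖x - y‖ else ‖x‖ + ‖y‖

/-- The loop `φ_n : [0,1] → ℍ` traversing the circle `L_n` at constant speed:
`φ_n t = (-cos(2πt)/n + 1/n, sin(2πt)/n)`. -/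
noncomputable def phiLoop (n : ℕ) (t : ℝ) : ℂ :=
  Complex.ofReal (-(Real.cos (2 * Real.pi * t)) / n + 1 / n) +
    Complex.ofReal (Real.sin (2 * Real.pi * t) / n) * Complex.I

open Classical in
/-- The commutator loop `c_k : [0, λ k] → ℍ`: the concatenation
`φ_{n_k} · φ_{n_k + 1} · φ_{n_k}⁻¹ · φ_{n_k + 1}⁻¹ : [0,4] → ℍ` precomposed with the
reparametrization `t ↦ 4 t / λ k`. -/
noncomputable def cLoop (nseq : ℕ → ℕ) (k : ℕ) (t : ℝ) : ℂ :=
  let u := 4 * t / lam k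
  if u ≤ 1 then phiLoop (nseq k) u
  else if u ≤ 2 then phiLoop (nseq k + 1) (u - 1)
  else if u ≤ 3 then phiLoop (nseq k) (1 - (u - 2))
  else phiLoop (nseq k + 1) (1 - (u - 3))

open Classical in
/-- Concatenation of `f : [0,a] → ℂ` with `g` (translated to start at time `a`). -/
noncomputable def concatAt (a : ℝ) (f g : ℝ → ℂ) : ℝ → ℂ :=
  fun t => if t ≤ a then f t else g (t - a)

/-- `iterConcat len f m` is the concatenation of `m + 1` copies of `f : [0, len] → ℂ`. -/
noncomputable def iterConcat (len : ℝ) (f : ℝ → ℂ) : ℕ → ℝ → ℂ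
  | 0 => f
  | m + 1 => concatAt len f (iterConcat len f m)

/-! ### The order and the tree -/

lemma nthSeq_cons_one (a : ℕ+) (s : List ℕ+) : nthSeq (a :: s) 1 = a := by
  simp [nthSeq]

lemma nthSeq_cons_succ (a : ℕ+) (s : List ℕ+) {j : ℕ} (hj : 1 ≤ j) :
    nthSeq (a :: s) (j + 1) = nthSeq s j := by
  obtain ⟨i, rfl⟩ : ∃ i, j = i + 1 := ⟨j - 1, by omega⟩
  simp [nthSeq]

lemma sle_cons (a b : ℕ+) (s t : List ℕ+) :
    sle (a :: s) (b :: t) ↔ a < b ∨ a = b ∧ sle s t := by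
  constructor
  · rintro (⟨j, h1, h2, h3, h4⟩ | ⟨h1, h2⟩)
    · rcases Nat.lt_or_ge 1 j with h | h
      · obtain ⟨i, rfl⟩ : ∃ i, j = i + 1 := ⟨j - 1, by omega⟩
        have hab := h3 1 le_rfl h
        rw [nthSeq_cons_one, nthSeq_cons_one] at hab
        refine Or.inr ⟨PNat.coe_injective hab, Or.inl ⟨i, by omega, by simp at h2 ⊢; omega,
          fun l hl hli => ?_, ?_⟩⟩
        · have := h3 (l + 1) (by omega) (by omega)
          rwa [nthSeq_cons_succ _ _ hl, nthSeq_cons_succ _ _ hl] at this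
        · rwa [nthSeq_cons_succ _ _ (by omega), nthSeq_cons_succ _ _ (by omega)] at h4
      · obtain rfl : j = 1 := by omega
        rw [nthSeq_cons_one, nthSeq_cons_one] at h4
        exact Or.inl h4
    · have hab := h2 1 le_rfl (by simp)
      rw [nthSeq_cons_one, nthSeq_cons_one] at hab
      refine Or.inr ⟨PNat.coe_injective hab, Or.inr ⟨by simpa using h1, fun l hl hls => ?_⟩⟩
      have := h2 (l + 1) (by omega) (by simpa using hls)
      rwa [nthSeq_cons_succ _ _ hl, nthSeq_cons_succ _ _ hl] at this
  · rintro (h | ⟨rfl, ⟨j, h1, h2, h3, h4⟩ | ⟨h1, h2⟩⟩)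
    · refine Or.inl ⟨1, le_rfl, by simp, fun i _ _ => by omega, ?_⟩
      rw [nthSeq_cons_one, nthSeq_cons_one]
      exact h
    · refine Or.inl ⟨j + 1, by omega, by simp at h2 ⊢; omega, fun i hi hij => ?_, ?_⟩
      · rcases Nat.lt_or_ge 1 i with h | h
        · obtain ⟨l, rfl⟩ : ∃ l, i = l + 1 := ⟨i - 1, by omega⟩
          rw [nthSeq_cons_succ _ _ (by omega), nthSeq_cons_succ _ _ (by omega)]
          exact h3 l (by omega) (by omega)
        · obtain rfl : i = 1 := by omega
          rw [nthSeq_cons_one, nthSeq_cons_one]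
      · rwa [nthSeq_cons_succ _ _ h1, nthSeq_cons_succ _ _ h1]
    · refine Or.inr ⟨by simpa using h1, fun i hi his => ?_⟩
      rcases Nat.lt_or_ge 1 i with h | h
      · obtain ⟨l, rfl⟩ : ∃ l, i = l + 1 := ⟨i - 1, by omega⟩
        rw [nthSeq_cons_succ _ _ (by omega), nthSeq_cons_succ _ _ (by omega)]
        exact h2 l (by omega) (by simpa using his)
      · obtain rfl : i = 1 := by omega
        rw [nthSeq_cons_one, nthSeq_cons_one]

/-- The order `≺` is Lean's lexicographic order on lists. -/
lemma slt_iff_lt : ∀ s t : List ℕ+, slt s t ↔ s < t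
  | [], [] => by simp [slt]
  | [], b :: t => by
    simp only [slt, ne_eq, List.nil_lt_cons, iff_true]
    exact ⟨Or.inr ⟨by simp, fun j h1 h2 => by simp at h2; omega⟩, by simp⟩
  | a :: s, [] => by
    simp only [slt, sle, List.not_lt_nil, iff_false]
    rintro ⟨⟨j, h1, h2, -⟩ | ⟨h, -⟩, -⟩
    · simp at h2; omega
    · simp at h
  | a :: s, b :: t => by
    rw [List.cons_lt_cons_iff, ← slt_iff_lt s t, slt, slt, sle_cons]
    have := @ne_of_lt _ _ a b
    simp only [ne_eq, List.cons.injEq]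
    tauto

/-- The immediate successor of `s` in the lexicographic order is `s + ⟨1⟩`. -/
lemma lt_append_one (s t : List ℕ+) : t < s ++ [1] ↔ t < s ∨ t = s := by
  induction s generalizing t with
  | nil =>
    cases t with
    | nil => simp
    | cons b t => simp [List.cons_lt_cons_iff]
  | cons a s ih =>
    cases t with
    | nil => simp
    | cons b t =>
      simp only [List.cons_append, List.cons_lt_cons_iff, ih, List.cons.injEq]
      tauto

/-- Between the siblings `s + ⟨i + 1⟩` (included) and `s + ⟨i + 2⟩` (excluded) lie precisely the
extensions of the former; note that `i.succPNat` is the positive natural `i + 1`. -/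
lemma lt_append_succ (s t : List ℕ+) (i : ℕ) :
    t < s ++ [(i + 1).succPNat] ↔ t < s ++ [i.succPNat] ∨ s ++ [i.succPNat] <+: t := by
  induction s generalizing t with
  | nil =>
    cases t with
    | nil => simp
    | cons b t =>
      have : b < (i + 1).succPNat ↔ b < i.succPNat ∨ i.succPNat = b := by
        simp only [← PNat.coe_lt_coe, ← PNat.coe_inj, Nat.succPNat_coe]
        omega
      simp [List.cons_lt_cons_iff, this]
  | cons a s ih =>
    cases t with
    | nil => simp
    | cons b t =>
      simp only [List.cons_append, List.cons_lt_cons_iff, ih, List.cons_prefix_cons]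
      have := @eq_comm _ a b
      tauto

lemma not_lt_of_prefix {s t : List ℕ+} (h : s <+: t) : ¬ t < s := by
  induction s generalizing t with
  | nil => simp
  | cons a s ih =>
    cases t with
    | nil => simp at h
    | cons b t =>
      rw [List.cons_prefix_cons] at h
      obtain ⟨rfl, h⟩ := h
      simpa [List.cons_lt_cons_iff] using ih h

lemma append_mem_BSet {p : List ℕ+} (hp : p ∈ BSet) {j : ℕ} (hj : j ≤ p.length) :
    p ++ [j.succPNat] ∈ BSet := by
  refine ⟨by simp, fun i hi hl => ?_⟩
  simp only [List.length_append, List.length_singleton] at hl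
  rcases Nat.lt_or_ge p.length i with h | h
  · obtain rfl : i = p.length + 1 := by omega
    simp [nthSeq]
    omega
  · have := hp.2 i hi h
    rwa [nthSeq, List.getD_append _ _ _ _ (by omega)]

lemma replicate_mem_BSet {n : ℕ} (hn : 1 ≤ n) : List.replicate n (1 : ℕ+) ∈ BSet := by
  refine ⟨by simpa using hn, fun i hi hl => ?_⟩
  simp only [List.length_replicate] at hl
  rw [nthSeq, List.getD_replicate _ (by omega)]
  exact hi

/-! ### Total weights -/

lemma lam_pos (n : ℕ) : 0 < lam n := by unfold lam; positivity

lemma lam_succ (n : ℕ) : (n + 1) * (2 * lam (n + 1)) = lam n := by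
  unfold lam
  rw [Nat.factorial_succ, pow_succ]
  push_cast
  field_simp

lemma lam_le (n : ℕ) : lam n ≤ (1 / 2) ^ n := by
  unfold lam
  rw [one_div_pow]
  gcongr
  have : (1 : ℝ) ≤ n.factorial := by exact_mod_cast n.factorial_pos
  nlinarith [pow_pos (two_pos : (0 : ℝ) < 2) n]

/-- The total weight `Σ_{t ∈ S} λ(ℓ(t))` of a set of sequences, valued in `[0, ∞]` so that
summability need not be tracked. -/
noncomputable def weight (S : Set (List ℕ+)) : ENNReal :=
  ∑' t : S, ENNReal.ofReal (lam t.1.length)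

lemma weight_union {S T : Set (List ℕ+)} (h : Disjoint S T) :
    weight (S ∪ T) = weight S + weight T :=
  ENNReal.summable.tsum_union_disjoint (f := fun t : List ℕ+ => ENNReal.ofReal (lam t.length))
    h ENNReal.summable

lemma weight_mono {S T : Set (List ℕ+)} (h : S ⊆ T) : weight S ≤ weight T :=
  ENNReal.tsum_mono_subtype (fun t : List ℕ+ => ENNReal.ofReal (lam t.length)) h

lemma weight_singleton (s : List ℕ+) : weight {s} = ENNReal.ofReal (lam s.length) :=
  tsum_singleton s (fun t : List ℕ+ => ENNReal.ofReal (lam t.length))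

lemma weight_iUnion {ι : Type*} {S : ι → Set (List ℕ+)} (h : Pairwise (Function.onFun Disjoint S)) :
    weight (⋃ i, S i) = ∑' i, weight (S i) :=
  ENNReal.tsum_biUnion (f := fun t : List ℕ+ => ENNReal.ofReal (lam t.length))
    (fun _ _ _ _ hij => h hij)

/-- The extensions in `B` of `p` that are longer than `p` by exactly `m`. -/
def level (p : List ℕ+) (m : ℕ) : Set (List ℕ+) :=
  {t | t ∈ BSet ∧ p <+: t ∧ t.length = p.length + m}

/-- All extensions of `p` in `B`. -/
def subtree (p : List ℕ+) : Set (List ℕ+) := {t | t ∈ BSet ∧ p <+: t}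

lemma level_zero {p : List ℕ+} (hp : p ∈ BSet) : level p 0 = {p} := by
  ext t
  simp only [level, Set.mem_ofPred_eq, Set.mem_singleton_iff, add_zero]
  constructor
  · rintro ⟨-, h, hl⟩
    exact (h.eq_of_length hl.symm).symm
  · rintro rfl
    exact ⟨hp, List.prefix_refl _, rfl⟩

/-- A node of length `k` has the `k + 1` children `p + ⟨1⟩, …, p + ⟨k + 1⟩`. -/
lemma level_succ (p : List ℕ+) (m : ℕ) :
    level p (m + 1) = ⋃ j : Fin (p.length + 1), level (p ++ [(j : ℕ).succPNat]) m := by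
  ext t
  simp only [level, Set.mem_ofPred_eq, Set.mem_iUnion, List.length_append, List.length_singleton]
  constructor
  · rintro ⟨hB, ⟨r, rfl⟩, hl⟩
    cases r with
    | nil => simp at hl
    | cons a r =>
      have h := hB.2 (p.length + 1) (by omega) (by simp)
      have ha : (a : ℕ) ≤ p.length + 1 := by simpa [nthSeq] using h
      have ha0 := a.pos
      refine ⟨⟨(a : ℕ) - 1, by omega⟩, hB, ⟨r, ?_⟩, by omega⟩
      have : ((a : ℕ) - 1).succPNat = a := by
        apply PNat.coe_injective
        simp only [Nat.succPNat_coe]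
        omega
      simp [this]
  · rintro ⟨j, hB, hpre, hl⟩
    exact ⟨hB, (List.prefix_append _ _).trans hpre, by omega⟩

lemma weight_level {p : List ℕ+} (hp : p ∈ BSet) (m : ℕ) :
    weight (level p m) = ENNReal.ofReal (lam p.length) * 2⁻¹ ^ m := by
  induction m generalizing p with
  | zero => rw [level_zero hp, weight_singleton]; simp
  | succ m ih =>
    rw [level_succ, weight_iUnion, tsum_fintype]
    · have : ∀ j : Fin (p.length + 1), weight (level (p ++ [(j : ℕ).succPNat]) m) =
          ENNReal.ofReal (lam (p.length + 1)) * 2⁻¹ ^ m := fun j => by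
        rw [ih (append_mem_BSet hp (by omega))]; simp
      simp only [this, Finset.sum_const, Finset.card_univ, Fintype.card_fin, nsmul_eq_mul]
      rw [← lam_succ p.length, ENNReal.ofReal_mul (by positivity), ENNReal.ofReal_mul (by norm_num),
        pow_succ, ← Nat.cast_succ, ENNReal.ofReal_natCast, ENNReal.ofReal_ofNat]
      have h2 : (2 : ENNReal) * 2⁻¹ = 1 := ENNReal.mul_inv_cancel (by simp) (by simp)
      calc _ = ((p.length + 1 : ℕ) : ENNReal) * ENNReal.ofReal (lam (p.length + 1)) *
            2⁻¹ ^ m * 1 := by ring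
        _ = _ := by rw [← h2]; ring
    · intro i j hij
      refine Set.disjoint_left.2 fun t hi hj => hij ?_
      have := List.prefix_of_prefix_length_le hi.2.1 hj.2.1 (by simp)
      have := this.eq_of_length (by simp)
      simp only [List.append_cancel_left_eq, List.cons.injEq, Nat.succPNat_inj, and_true] at this
      exact Fin.ext this

/-- The subtree rooted at a node of length `k` has weight `2λ(k)`: its successive levels have
weights `λ(k), λ(k)/2, λ(k)/4, …`. -/
lemma weight_subtree {p : List ℕ+} (hp : p ∈ BSet) :
    weight (subtree p) = ENNReal.ofReal (2 * lam p.length) := by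
  have h : subtree p = ⋃ m, level p m := by
    ext t
    simp only [subtree, level, Set.mem_ofPred_eq, Set.mem_iUnion]
    constructor
    · rintro ⟨hB, hpre⟩
      exact ⟨t.length - p.length, hB, hpre, by have := hpre.length_le; omega⟩
    · rintro ⟨m, hB, hpre, -⟩
      exact ⟨hB, hpre⟩
  rw [h, weight_iUnion]
  · simp only [weight_level hp]
    rw [ENNReal.tsum_mul_left, ENNReal.tsum_geometric, ENNReal.one_sub_inv_two, inv_inv,
      mul_comm, ENNReal.ofReal_mul (by norm_num), ENNReal.ofReal_ofNat]
  · intro i j hij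
    refine Set.disjoint_left.2 fun t hi hj => hij ?_
    have h1 := hi.2.2
    have h2 := hj.2.2
    omega

lemma weight_BSet : weight BSet = 1 := by
  have h1 : ([1] : List ℕ+) ∈ BSet := replicate_mem_BSet (n := 1) le_rfl
  have h : BSet = subtree [1] := by
    ext t
    simp only [subtree, Set.mem_ofPred_eq, iff_self_and]
    intro ht
    cases t with
    | nil => simpa using ht.1
    | cons a t =>
      have := ht.2 1 le_rfl (by simp)
      rw [nthSeq_cons_one] at this
      have ha : (1 : ℕ+) = a := PNat.coe_injective (le_antisymm a.pos this)
      simp [ha]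
  rw [h, weight_subtree h1]
  simp [lam]

/-- The elements of `B` preceding `s`. -/
def initial (s : List ℕ+) : Set (List ℕ+) := {t | t ∈ BSet ∧ t < s}

lemma tau_eq (s : List ℕ+) : tau s = (weight (initial s)).toReal := by
  have h : {t : List ℕ+ | t ∈ BSet ∧ slt t s} = initial s := by
    ext t; simp [initial, slt_iff_lt]
  rw [← h, weight, ENNReal.tsum_toReal_eq (fun _ => ENNReal.ofReal_ne_top)]
  exact tsum_congr fun t => (ENNReal.toReal_ofReal (lam_pos _).le).symm

lemma weight_initial_ne_top (s : List ℕ+) : weight (initial s) ≠ ⊤ :=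
  ne_top_of_le_ne_top (by rw [weight_BSet]; simp) (weight_mono (T := BSet) fun _ h => h.1)

lemma tau_nonneg (s : List ℕ+) : 0 ≤ tau s := by rw [tau_eq]; exact ENNReal.toReal_nonneg

lemma tau_append_one {s : List ℕ+} (hs : s ∈ BSet) : tau (s ++ [1]) = tau s + lam s.length := by
  have h : initial (s ++ [1]) = initial s ∪ {s} := by
    ext t
    simp only [initial, lt_append_one, Set.mem_ofPred_eq, Set.mem_union, Set.mem_singleton_iff]
    constructor
    · tauto
    · rintro (h | rfl) <;> tauto
  rw [tau_eq, tau_eq, h, weight_union, weight_singleton, ENNReal.toReal_add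
    (weight_initial_ne_top s) ENNReal.ofReal_ne_top, ENNReal.toReal_ofReal (lam_pos _).le]
  simp [initial]

lemma disjoint_initial_subtree (p : List ℕ+) : Disjoint (initial p) (subtree p) :=
  Set.disjoint_left.2 fun _ h1 h2 => not_lt_of_prefix h2.2 h1.2

lemma tau_append_succ {s : List ℕ+} (hs : s ∈ BSet) {j : ℕ} (hj : j ≤ s.length) :
    tau (s ++ [(j + 1).succPNat]) = tau (s ++ [j.succPNat]) + 2 * lam (s.length + 1) := by
  have h : initial (s ++ [(j + 1).succPNat]) =
      initial (s ++ [j.succPNat]) ∪ subtree (s ++ [j.succPNat]) := by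
    ext t
    simp only [initial, subtree, lt_append_succ, Set.mem_ofPred_eq, Set.mem_union]
    tauto
  rw [tau_eq, tau_eq, h, weight_union (disjoint_initial_subtree _),
    weight_subtree (append_mem_BSet hs hj), ENNReal.toReal_add (weight_initial_ne_top _)
    ENNReal.ofReal_ne_top, ENNReal.toReal_ofReal (by linarith [lam_pos (s ++ [j.succPNat]).length])]
  simp

/-- The interval of `s` starts with a piece of length `λ(ℓ(s))`; then come the intervals of its
children `s + ⟨j + 1⟩`, each of length `2λ(ℓ(s) + 1)`. -/
lemma tau_child {s : List ℕ+} (hs : s ∈ BSet) {j : ℕ} (hj : j ≤ s.length) :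
    tau (s ++ [j.succPNat]) = tau s + lam s.length + j * (2 * lam (s.length + 1)) := by
  induction j with
  | zero =>
    have h1 : Nat.succPNat 0 = 1 := rfl
    simpa [h1] using tau_append_one hs
  | succ j ih =>
    rw [tau_append_succ hs (by omega), ih (by omega)]
    push_cast
    ring

/-- The interval of `p` lies in `[0, 1]`, where `σ₁` is constrained. -/
lemma tau_add_le_one {p : List ℕ+} (hp : p ∈ BSet) : tau p + 2 * lam p.length ≤ 1 := by
  have h : weight (initial p) + weight (subtree p) ≤ 1 := by
    rw [← weight_union (disjoint_initial_subtree p), ← weight_BSet]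
    exact weight_mono (Set.union_subset (fun _ h => h.1) fun _ h => h.1)
  have h2 := ENNReal.toReal_mono (by simp) h
  rwa [ENNReal.toReal_add (weight_initial_ne_top _) (by
    rw [weight_subtree hp]; exact ENNReal.ofReal_ne_top), ← tau_eq,
    weight_subtree hp, ENNReal.toReal_ofReal (by linarith [lam_pos p.length]),
    ENNReal.toReal_one] at h2

/-! ### Self-similarity -/

lemma norm_le_HEdist_zero (x : ℂ) : ‖x‖ ≤ HEdist x 0 := by
  unfold HEdist
  split_ifs <;> simp

lemma cLoop_zero (nseq : ℕ → ℕ) (k : ℕ) : cLoop nseq k 0 = 0 := by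
  simp [cLoop, phiLoop, neg_div]

/-- If `v` lies in the first `N + 1` consecutive intervals of length `L`, it lies in one of them. -/
lemma exists_piece {L v : ℝ} (hv : 0 ≤ v) (N : ℕ) (hN : v ≤ (N + 1) * L) :
    ∃ j ≤ N, ∃ w ∈ Set.Icc 0 L, v = j * L + w := by
  induction N with
  | zero => exact ⟨0, le_rfl, v, ⟨hv, by simpa using hN⟩, by simp⟩
  | succ N ih =>
    rcases le_total v ((N + 1) * L) with h | h
    · obtain ⟨j, hj, w, hw, rfl⟩ := ih h
      exact ⟨j, by omega, w, hw, rfl⟩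
    · refine ⟨N + 1, le_rfl, v - (N + 1) * L, ⟨by linarith, ?_⟩, by push_cast; ring⟩
      push_cast at hN
      linarith

/-- Near the start `τ(p)` of the subtree interval of `p` the path stays near the origin, since
`σ₁(τ(p)) = c(0) = 0`. -/
lemma norm_sigma_le {nseq : ℕ → ℕ} {σ₁ : ℝ → ℂ}
    (hlip : ∀ t ∈ Set.Icc (0 : ℝ) 1, ∀ t' ∈ Set.Icc (0 : ℝ) 1,
      HEdist (σ₁ t) (σ₁ t') ≤ |t - t'|)
    (hval : ∀ s ∈ BSet, ∀ t ∈ Set.Icc (tau s) (tau (s ++ [1])),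
      σ₁ t = cLoop nseq s.length (t - tau s))
    {p : List ℕ+} (hp : p ∈ BSet) {u : ℝ} (hu : u ∈ Set.Icc 0 (2 * lam p.length)) :
    ‖σ₁ (tau p + u)‖ ≤ 2 * lam p.length := by
  have h0 : σ₁ (tau p) = 0 := by
    rw [hval p hp _ ⟨le_rfl, by rw [tau_append_one hp]; linarith [lam_pos p.length]⟩, sub_self,
      cLoop_zero]
  have h1 := tau_add_le_one hp
  have h2 := tau_nonneg p
  have h3 := lam_pos p.length
  have h := hlip (tau p + u) ⟨by linarith [hu.1], by linarith [hu.2]⟩ (tau p)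
    ⟨h2, by linarith⟩
  rw [h0, add_sub_cancel_left, abs_of_nonneg hu.1] at h
  exact (norm_le_HEdist_zero _).trans (h.trans hu.2)

/-- Descending `m` levels into the subtrees of `p` and `q` in parallel: either the time `u` falls
into an interval on which `σ₁` is one of the loops `c`, the same one in both subtrees, or it is
still in a subtree interval of length `2λ(ℓ(p) + m)`, on which `σ₁` is small. -/
lemma sigma_eq_or_small {nseq : ℕ → ℕ} {σ₁ : ℝ → ℂ}
    (hlip : ∀ t ∈ Set.Icc (0 : ℝ) 1, ∀ t' ∈ Set.Icc (0 : ℝ) 1,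
      HEdist (σ₁ t) (σ₁ t') ≤ |t - t'|)
    (hval : ∀ s ∈ BSet, ∀ t ∈ Set.Icc (tau s) (tau (s ++ [1])),
      σ₁ t = cLoop nseq s.length (t - tau s)) (m : ℕ) :
    ∀ {p q : List ℕ+}, p ∈ BSet → q ∈ BSet → p.length = q.length →
    ∀ u ∈ Set.Icc 0 (2 * lam p.length), σ₁ (tau p + u) = σ₁ (tau q + u) ∨
      (‖σ₁ (tau p + u)‖ ≤ 2 * lam (p.length + m) ∧
        ‖σ₁ (tau q + u)‖ ≤ 2 * lam (p.length + m)) := by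
  induction m with
  | zero =>
    intro p q hp hq hpq u hu
    refine Or.inr ⟨norm_sigma_le hlip hval hp hu, ?_⟩
    rw [hpq] at hu ⊢
    exact norm_sigma_le hlip hval hq hu
  | succ m ih =>
    intro p q hp hq hpq u hu
    rcases le_total u (lam p.length) with h | h
    · left
      rw [hval p hp _ ⟨by linarith [hu.1], by rw [tau_append_one hp]; linarith⟩,
        hval q hq _ ⟨by linarith [hu.1], by rw [tau_append_one hq, ← hpq]; linarith⟩, hpq]
      simp
    · obtain ⟨j, hj, w, hw, hjw⟩ := exists_piece (L := 2 * lam (p.length + 1))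
        (v := u - lam p.length) (by linarith) p.length (by rw [lam_succ]; linarith [hu.2])
      have := ih (append_mem_BSet hp hj) (append_mem_BSet hq (hpq ▸ hj)) (by simp [hpq]) w
        (by simpa using hw)
      have e1 : tau (p ++ [j.succPNat]) + w = tau p + u := by
        rw [tau_child hp hj]; linarith
      have e2 : tau (q ++ [j.succPNat]) + w = tau q + u := by
        rw [tau_child hq (hpq ▸ hj), ← hpq]; linarith
      rw [e1, e2] at this
      simpa [add_assoc, add_comm 1 m] using this

/-- `σ₁` restricted to the interval of a node depends, up to translation, only on the length of the
node. -/
lemma sigma_eq_of_length_eq {nseq : ℕ → ℕ} {σ₁ : ℝ → ℂ}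
    (hlip : ∀ t ∈ Set.Icc (0 : ℝ) 1, ∀ t' ∈ Set.Icc (0 : ℝ) 1,
      HEdist (σ₁ t) (σ₁ t') ≤ |t - t'|)
    (hval : ∀ s ∈ BSet, ∀ t ∈ Set.Icc (tau s) (tau (s ++ [1])),
      σ₁ t = cLoop nseq s.length (t - tau s))
    {p q : List ℕ+} (hp : p ∈ BSet) (hq : q ∈ BSet) (hpq : p.length = q.length)
    {u : ℝ} (hu : u ∈ Set.Icc 0 (2 * lam p.length)) :
    σ₁ (tau p + u) = σ₁ (tau q + u) := by
  by_contra hne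
  have key : ∀ m, ‖σ₁ (tau p + u) - σ₁ (tau q + u)‖ ≤ 4 * (1 / 2) ^ m := fun m => by
    obtain ⟨h1, h2⟩ := (sigma_eq_or_small hlip hval m hp hq hpq u hu).resolve_left hne
    have h3 : lam (p.length + m) ≤ (1 / 2) ^ m := (lam_le _).trans
      (pow_le_pow_of_le_one (by norm_num) (by norm_num) (by omega))
    linarith [norm_sub_le (σ₁ (tau p + u)) (σ₁ (tau q + u))]
  have hlim : Filter.Tendsto (fun m : ℕ => 4 * (1 / 2 : ℝ) ^ m) Filter.atTop (nhds 0) := by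
    simpa using (tendsto_pow_atTop_nhds_zero_of_lt_one (by norm_num)
      (by norm_num : (1 / 2 : ℝ) < 1)).const_mul 4
  exact hne (sub_eq_zero.1 (norm_le_zero_iff.1 (ge_of_tendsto' hlim key)))

/-- The last `m + 1` children of `s` account for the concatenation of `m + 1` copies of
`σ_{ℓ(s) + 1}`; here `i + m = ℓ(s)`, so that `s + ⟨i + 1⟩` is the first of these children. -/
lemma iterConcat_eq {nseq : ℕ → ℕ} {σ₁ : ℝ → ℂ}
    (hlip : ∀ t ∈ Set.Icc (0 : ℝ) 1, ∀ t' ∈ Set.Icc (0 : ℝ) 1,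
      HEdist (σ₁ t) (σ₁ t') ≤ |t - t'|)
    (hval : ∀ s ∈ BSet, ∀ t ∈ Set.Icc (tau s) (tau (s ++ [1])),
      σ₁ t = cLoop nseq s.length (t - tau s))
    {s : List ℕ+} (hs : s ∈ BSet) (m : ℕ) :
    ∀ i, i + m = s.length → ∀ v ∈ Set.Icc 0 ((m + 1) * (2 * lam (s.length + 1))),
      iterConcat (2 * lam (s.length + 1))
        (fun u => σ₁ (u + tau (List.replicate (s.length + 1) (1 : ℕ+)))) m v =
      σ₁ (tau (s ++ [i.succPNat]) + v) := by
  have base : ∀ i ≤ s.length, ∀ v ∈ Set.Icc 0 (2 * lam (s.length + 1)),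
      σ₁ (v + tau (List.replicate (s.length + 1) (1 : ℕ+))) =
        σ₁ (tau (s ++ [i.succPNat]) + v) := fun i hi v hv => by
    rw [add_comm v]
    exact sigma_eq_of_length_eq hlip hval (replicate_mem_BSet (by omega))
      (append_mem_BSet hs hi) (by simp) (by simpa using hv)
  induction m with
  | zero =>
    intro i hi v hv
    exact base i (by omega) v (by simpa using hv)
  | succ m ih =>
    intro i hi v hv
    simp only [iterConcat, concatAt]
    split_ifs with h
    · exact base i (by omega) v ⟨hv.1, h⟩
    · have hv2 := hv.2
      push_cast at hv2
      rw [ih (i + 1) (by omega) _ ⟨by linarith, by linarith⟩, tau_append_succ hs (by omega)]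
      congr 1
      ring

/-! ### The decomposition of the path -/

/-- For every `n > 1` and every `t ∈ [0, 2 λ (n-1)]`, one has
`σ_{n-1} t = (c_{n-1} · σ_n ⋯ σ_n) t` (with `n` copies of `σ_n`), where
`σ_m t = σ_1 (t + τ (m·⟨1⟩))` and `σ_1 : [0,1] → ℍ` is the unique `1`-Lipschitz map with
`σ_1 t = c_{ℓ s} (t - τ s)` on `[τ s, τ (s + ⟨1⟩)]` for every `s ∈ B`. -/
theorem sigma_pred_eq_concat (nseq : ℕ → ℕ)
    (hpos : ∀ k, 1 ≤ k → 1 ≤ nseq k)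
    (hlamseq : ∀ k, 1 ≤ k → 8 * Real.pi / (nseq k : ℝ) ≤ lam k)
    (hsep : ∀ k, 1 ≤ k → nseq k + 1 < nseq (k + 1))
    (σ₁ : ℝ → ℂ)
    (hmem : ∀ t ∈ Set.Icc (0 : ℝ) 1, σ₁ t ∈ HSet)
    (hlip : ∀ t ∈ Set.Icc (0 : ℝ) 1, ∀ t' ∈ Set.Icc (0 : ℝ) 1,
      HEdist (σ₁ t) (σ₁ t') ≤ |t - t'|)
    (hval : ∀ s ∈ BSet, ∀ t ∈ Set.Icc (tau s) (tau (s ++ [1])),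
      σ₁ t = cLoop nseq s.length (t - tau s))
    (n : ℕ) (hn : 1 < n) :
    ∀ t ∈ Set.Icc (0 : ℝ) (2 * lam (n - 1)),
      σ₁ (t + tau (List.replicate (n - 1) (1 : ℕ+))) =
        concatAt (lam (n - 1)) (cLoop nseq (n - 1))
          (iterConcat (2 * lam n) (fun u => σ₁ (u + tau (List.replicate n (1 : ℕ+))))
            (n - 1)) t := by
  obtain ⟨k, rfl⟩ : ∃ k, n = k + 1 := ⟨n - 1, by omega⟩
  have hB : List.replicate k (1 : ℕ+) ∈ BSet := replicate_mem_BSet (by omega)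
  intro t ht
  rw [Nat.add_sub_cancel] at ht ⊢
  rw [concatAt]
  split_ifs with h
  · rw [hval _ hB _ ⟨by linarith [ht.1], by
      rw [tau_append_one hB, List.length_replicate]; linarith⟩]
    simp
  · have hl := lam_succ k
    have key := iterConcat_eq hlip hval hB k 0 (by simp) (t - lam k)
      ⟨by linarith, by rw [List.length_replicate]; linarith [ht.2]⟩
    rw [tau_child hB (by omega), List.length_replicate] at key
    rw [key]
    congr 1
    simp
    ring
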